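/- Let μ be a weak Gibbs measure for an asymptotically additive sequence Φ = (φ_n)_n on a topologically mixing one-sided subshift of finite type (Σ,σ), and define ψ_n : Σ → ℝ by ψ_n(ω) := log μ(C_{i₁…i_n}) for ω ∈ C_{i₁…i_n}. Then the topological pressure of the sequence Ψ = (ψ_n)_n is zero: P(Ψ) = 0. -/

import Mathlib

open MeasureTheory Filter Topology Set

namespace WG

/-- The one-sided subshift of finite type determined by a 0-1 transition matrix `M`. -/
abbrev Space {k : ℕ} (M : Matrix (Fin k) (Fin k) ℕ) : Type :=
  {ω : ℕ → Fin k // ∀ i : ℕ, M (ω i) (ω (i + 1)) = 1}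

variable {k : ℕ}

/-- The shift map on the subshift. -/
def shift (M : Matrix (Fin k) (Fin k) ℕ) (ω : Space M) : Space M :=
  ⟨fun i => ω.1 (i + 1), fun i => ω.2 (i + 1)⟩

/-- `M` is a 0-1 matrix and the subshift is topologically mixing:
some power of `M` has all entries strictly positive. -/
def Mixing (M : Matrix (Fin k) (Fin k) ℕ) : Prop :=
  (∀ i j, M i j = 0 ∨ M i j = 1) ∧ ∃ l : ℕ, 0 < l ∧ ∀ i j, 0 < (M ^ l) i j

/-- The cylinder `C_{w₀ … w_{n-1}}`. -/
def cyl (M : Matrix (Fin k) (Fin k) ℕ) (n : ℕ) (w : Fin n → Fin k) : Set (Space M) :=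
  {ω | ∀ j : Fin n, ω.1 j.1 = w j}

/-- The initial word of length `n` of a point `ω`. -/
def word (M : Matrix (Fin k) (Fin k) ℕ) (n : ℕ) (ω : Space M) : Fin n → Fin k :=
  fun j => ω.1 j.1

/-- Birkhoff sums `S_n f`. -/
noncomputable def birk (M : Matrix (Fin k) (Fin k) ℕ) (f : Space M → ℝ) (n : ℕ)
    (ω : Space M) : ℝ :=
  ∑ j ∈ Finset.range n, f ((shift M)^[j] ω)

/-- The standard metric `d(ω,κ) = ∑ᵢ |ωᵢ - κᵢ| / 2^{i+1}` on the shift space. -/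
noncomputable def dist' (M : Matrix (Fin k) (Fin k) ℕ) (ω κ : Space M) : ℝ :=
  ∑' i : ℕ, |((ω.1 i : ℕ) : ℝ) - ((κ.1 i : ℕ) : ℝ)| / 2 ^ (i + 1)

/-- `E` is an `(n,ε)`-separated set. -/
def IsSep (M : Matrix (Fin k) (Fin k) ℕ) (n : ℕ) (ε : ℝ) (E : Finset (Space M)) : Prop :=
  ∀ ω ∈ E, ∀ κ ∈ E, ω ≠ κ → ∃ i < n, ε < dist' M ((shift M)^[i] ω) ((shift M)^[i] κ)

/-- `P(Φ, n, ε)`: supremum of `∑_{ω ∈ E} exp(φ_n ω)` over `(n,ε)`-separated sets `E`. -/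
noncomputable def sepSum (M : Matrix (Fin k) (Fin k) ℕ) (Φ : ℕ → Space M → ℝ)
    (n : ℕ) (ε : ℝ) : ℝ :=
  sSup {s | ∃ E : Finset (Space M), IsSep M n ε E ∧ s = ∑ ω ∈ E, Real.exp (Φ n ω)}

/-- `P` is the topological pressure of the sequence `Φ`:
`P = lim_{ε→0⁺} limsup_n (1/n) log P(Φ,n,ε)`. -/
def IsPressure (M : Matrix (Fin k) (Fin k) ℕ) (Φ : ℕ → Space M → ℝ) (P : ℝ) : Prop :=
  Tendsto (fun ε : ℝ => limsup (fun n : ℕ => Real.log (sepSum M Φ n ε) / n) atTop)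
    (𝓝[>] (0 : ℝ)) (𝓝 P)

/-- The sequence `Φ = (φ_n)` is asymptotically additive. -/
def AsympAdd (M : Matrix (Fin k) (Fin k) ℕ) (Φ : ℕ → Space M → ℝ) : Prop :=
  (∀ n, Continuous (Φ n)) ∧
  ∀ ε > (0 : ℝ), ∃ ρ : Space M → ℝ, Continuous ρ ∧
    limsup (fun n : ℕ => (⨆ ω : Space M, |Φ n ω - birk M ρ n ω|) / n) atTop < ε

/-- `μ` is a weak Gibbs measure for the sequence `Φ` with constant `P`. -/
def WeakGibbs (M : Matrix (Fin k) (Fin k) ℕ) (Φ : ℕ → Space M → ℝ) (P : ℝ)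
    (μ : Measure (Space M)) : Prop :=
  ∃ K : ℕ → ℝ, (∀ n, 0 < K n) ∧ Tendsto (fun n : ℕ => Real.log (K n) / n) atTop (𝓝 0) ∧
    ∀ n : ℕ, ∀ w : Fin n → Fin k, ∀ ω ∈ cyl M n w,
      1 / K n ≤ (μ (cyl M n w)).toReal / Real.exp (Φ n ω - n * P) ∧
      (μ (cyl M n w)).toReal / Real.exp (Φ n ω - n * P) ≤ K n

/-- `μ` is a Gibbs measure for the sequence `Φ` with constant `P`. -/
def Gibbs (M : Matrix (Fin k) (Fin k) ℕ) (Φ : ℕ → Space M → ℝ) (P : ℝ)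
    (μ : Measure (Space M)) : Prop :=
  ∃ K : ℝ, 0 < K ∧
    ∀ n : ℕ, ∀ w : Fin n → Fin k, ∀ ω ∈ cyl M n w,
      1 / K ≤ (μ (cyl M n w)).toReal / Real.exp (Φ n ω - n * P) ∧
      (μ (cyl M n w)).toReal / Real.exp (Φ n ω - n * P) ≤ K

/-- Sum of `exp(φ_n ω)` over points of period `n`. -/
noncomputable def perSum (M : Matrix (Fin k) (Fin k) ℕ) (Φ : ℕ → Space M → ℝ) (n : ℕ) : ℝ :=
  ∑' ω : {ω : Space M // (shift M)^[n] ω = ω}, Real.exp (Φ n ω.1)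

/-- `var_n(g)`: the variation of `g` over cylinders of length `n`. -/
noncomputable def varCyl (M : Matrix (Fin k) (Fin k) ℕ) (n : ℕ) (g : Space M → ℝ) : ℝ :=
  sSup {x | ∃ ω κ : Space M, (∀ j : Fin n, ω.1 j.1 = κ.1 j.1) ∧ x = |g ω - g κ|}

open Classical in
/-- `∑_{C ∈ Z_n} exp (sup_C S_n φ)`: the cylinder partition sum of `φ`. -/
noncomputable def cylSum (M : Matrix (Fin k) (Fin k) ℕ) (φ : Space M → ℝ) (n : ℕ) : ℝ :=
  ∑ w ∈ Finset.univ.filter (fun w : Fin n → Fin k => (cyl M n w).Nonempty),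
    Real.exp (sSup (birk M φ n '' cyl M n w))

end WG

/-!
An `(n, ε)`-separated set with `k / 2 ^ m ≤ ε` meets each cylinder of length `n` in at most `k ^ m`
points, since two points of such a cylinder whose next `m` letters also agree are never `ε` apart.
For `ε < 1 / 2`, conversely, choosing one point in each nonempty cylinder of length `n` gives an
`(n, ε)`-separated set. The weak Gibbs bounds exclude null cylinders, so `exp ψ_n` is the mass of
the cylinder. These masses add up to the total mass of `μ`, so the partition sum lies between `μ(Σ)`
and `k ^ m * μ(Σ)` uniformly in `n` and has no exponential growth.
-/

theorem tendsto_log_div_natCast_of_mem_Icc {u : ℕ → ℝ} {a b : ℝ} (ha : 0 < a)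
    (hu : ∀ n, u n ∈ Icc a b) : Tendsto (fun n : ℕ => Real.log (u n) / n) atTop (𝓝 0) := by
  refine tendsto_of_tendsto_of_tendsto_of_le_of_le
    (tendsto_const_div_atTop_nhds_zero_nat (Real.log a))
    (tendsto_const_div_atTop_nhds_zero_nat (Real.log b)) (fun n => ?_) (fun n => ?_)
  · have := (hu n).1
    dsimp only
    gcongr
  · have hpos : 0 < u n := ha.trans_le (hu n).1
    have := (hu n).2
    dsimp only
    gcongr

theorem abs_natCast_fin_sub_le {k : ℕ} (a b : Fin k) : |((a : ℕ) : ℝ) - ((b : ℕ) : ℝ)| ≤ k :=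
  abs_sub_le_of_nonneg_of_le (Nat.cast_nonneg _) (Nat.cast_le.2 a.2.le)
    (Nat.cast_nonneg _) (Nat.cast_le.2 b.2.le)

theorem one_le_abs_natCast_fin_sub {k : ℕ} {a b : Fin k} (h : a ≠ b) :
    1 ≤ |((a : ℕ) : ℝ) - ((b : ℕ) : ℝ)| := by
  have hne : ((a : ℕ) : ℤ) - ((b : ℕ) : ℤ) ≠ 0 := by
    simpa [sub_eq_zero, Fin.val_inj] using h
  exact_mod_cast Int.one_le_abs hne

namespace WG

variable {k : ℕ} {M : Matrix (Fin k) (Fin k) ℕ}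

theorem shift_iterate_apply (ω : Space M) (i j : ℕ) : ((shift M)^[i] ω).1 j = ω.1 (j + i) := by
  induction i generalizing ω with
  | zero => rfl
  | succ i ih => exact (ih (shift M ω)).trans (congrArg ω.1 (add_assoc j i 1))

theorem summable_dist' (ω κ : Space M) :
    Summable fun i : ℕ => |((ω.1 i : ℕ) : ℝ) - ((κ.1 i : ℕ) : ℝ)| / 2 ^ (i + 1) := by
  refine .of_nonneg_of_le (fun i => by positivity) (fun i => ?_) (summable_geometric_two' (k : ℝ))
  rw [div_div, ← pow_succ']
  gcongr
  exact abs_natCast_fin_sub_le _ _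

theorem dist'_le_of_forall_lt_eq {ω κ : Space M} {m : ℕ} (h : ∀ i < m, ω.1 i = κ.1 i) :
    dist' M ω κ ≤ k / 2 ^ m := by
  have hs := summable_dist' ω κ
  have head_eq_zero : ∑ i ∈ Finset.range m,
      |((ω.1 i : ℕ) : ℝ) - ((κ.1 i : ℕ) : ℝ)| / 2 ^ (i + 1) = 0 :=
    Finset.sum_eq_zero fun i hi => by simp [h i (Finset.mem_range.1 hi)]
  calc dist' M ω κ
      = ∑' i : ℕ, |((ω.1 (i + m) : ℕ) : ℝ) - ((κ.1 (i + m) : ℕ) : ℝ)| / 2 ^ (i + m + 1) := by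
        rw [dist', ← hs.sum_add_tsum_nat_add m, head_eq_zero, zero_add]
    _ ≤ ∑' i : ℕ, (k : ℝ) / 2 ^ m / 2 / 2 ^ i := by
        refine Summable.tsum_le_tsum (fun i => ?_) ((summable_nat_add_iff m).2 hs)
          (summable_geometric_two' _)
        rw [show (k : ℝ) / 2 ^ m / 2 / 2 ^ i = k / 2 ^ (i + m + 1) by ring]
        gcongr
        exact abs_natCast_fin_sub_le _ _
    _ = k / 2 ^ m := tsum_geometric_two' _

theorem half_le_dist'_of_ne {ω κ : Space M} (h : ω.1 0 ≠ κ.1 0) : 1 / 2 ≤ dist' M ω κ :=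
  calc (1 : ℝ) / 2
      ≤ |((ω.1 0 : ℕ) : ℝ) - ((κ.1 0 : ℕ) : ℝ)| / 2 ^ (0 + 1) := by
        rw [zero_add, pow_one]
        gcongr
        exact one_le_abs_natCast_fin_sub h
    _ ≤ dist' M ω κ := (summable_dist' ω κ).le_tsum 0 fun i _ => by positivity

theorem isSep_of_injOn_word {n : ℕ} {ε : ℝ} {E : Finset (Space M)} (hε : ε < 1 / 2)
    (hE : InjOn (word M n) E) : IsSep M n ε E := by
  intro ω hω κ hκ hne
  obtain ⟨j, hj⟩ := Function.ne_iff.1 (hE.ne hω hκ hne)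
  refine ⟨j, j.2, hε.trans_le (half_le_dist'_of_ne ?_)⟩
  simpa only [word, shift_iterate_apply, zero_add] using hj

theorem IsSep.eq_of_word_eq {n m : ℕ} {ε : ℝ} {E : Finset (Space M)} (hE : IsSep M n ε E)
    (hm : (k : ℝ) / 2 ^ m ≤ ε) {ω κ : Space M} (hω : ω ∈ E) (hκ : κ ∈ E)
    (hword : word M n ω = word M n κ)
    (hnext : word M m ((shift M)^[n] ω) = word M m ((shift M)^[n] κ)) : ω = κ := by
  have hagree : ∀ j < n + m, ω.1 j = κ.1 j := by
    intro j hj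
    rcases lt_or_ge j n with hjn | hjn
    · exact congrFun hword ⟨j, hjn⟩
    · have := congrFun hnext ⟨j - n, by lia⟩
      simpa only [word, shift_iterate_apply, Nat.sub_add_cancel hjn] using this
  by_contra hne
  obtain ⟨i, hi, hd⟩ := hE ω hω κ hκ hne
  refine hd.not_ge ((dist'_le_of_forall_lt_eq fun j hj => ?_).trans hm)
  simpa only [shift_iterate_apply] using hagree (j + i) (by lia)

theorem IsSep.card_filter_word_le {n m : ℕ} {ε : ℝ} {E : Finset (Space M)} (hE : IsSep M n ε E)
    (hm : (k : ℝ) / 2 ^ m ≤ ε) (w : Fin n → Fin k) :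
    (E.filter fun ω => word M n ω = w).card ≤ k ^ m := by
  have hinj : InjOn (fun ω => word M m ((shift M)^[n] ω)) (E.filter fun ω => word M n ω = w) := by
    intro ω hω κ hκ hnext
    obtain ⟨hωE, hωw⟩ := Finset.mem_filter.1 hω
    obtain ⟨hκE, hκw⟩ := Finset.mem_filter.1 hκ
    exact hE.eq_of_word_eq hm hωE hκE (hωw.trans hκw.symm) hnext
  simpa using Finset.card_le_card_of_injOn _ (fun _ _ => Finset.mem_univ _) hinj

theorem IsSep.sum_comp_word_le {n m : ℕ} {ε : ℝ} {E : Finset (Space M)} (hE : IsSep M n ε E)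
    (hm : (k : ℝ) / 2 ^ m ≤ ε) {f : (Fin n → Fin k) → ℝ} (hf : 0 ≤ f) :
    ∑ ω ∈ E, f (word M n ω) ≤ k ^ m * ∑ w, f w :=
  calc ∑ ω ∈ E, f (word M n ω)
      = ∑ w, (E.filter fun ω => word M n ω = w).card * f w := by
        simp only [← Finset.sum_fiberwise' E (word M n) f, Finset.sum_const, nsmul_eq_mul]
    _ ≤ ∑ w, (k : ℝ) ^ m * f w := by
        gcongr with w
        · exact hf w
        · exact_mod_cast hE.card_filter_word_le hm w
    _ = k ^ m * ∑ w, f w := (Finset.mul_sum ..).symm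

theorem exists_isSep_sum_comp_word_eq {n : ℕ} {ε : ℝ} (hε : ε < 1 / 2)
    {f : (Fin n → Fin k) → ℝ} (hf : Function.support f ⊆ range (word M n)) :
    ∃ E : Finset (Space M), IsSep M n ε E ∧ ∑ ω ∈ E, f (word M n ω) = ∑ w, f w := by
  have hsurj : SurjOn (word M n) univ (range (word M n)) := image_univ.ge
  obtain ⟨S, -, hS⟩ := hsurj.exists_bijOn_subset
  lift S to Finset (Space M) using (hS.finite_iff_finite).2 (toFinite _)
  refine ⟨S, isSep_of_injOn_word hε hS.injOn, ?_⟩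
  rw [← Finset.sum_image hS.injOn]
  refine Finset.sum_subset (Finset.subset_univ _) fun w _ hw => ?_
  by_contra hfw
  obtain ⟨ω, hω, rfl⟩ := hS.surjOn (hf hfw)
  exact hw (Finset.mem_image_of_mem _ hω)

theorem sepSum_mem_Icc {n m : ℕ} {ε : ℝ} (hm : (k : ℝ) / 2 ^ m ≤ ε) (hε : ε < 1 / 2)
    {Φ : ℕ → Space M → ℝ} {f : (Fin n → Fin k) → ℝ} (hf : 0 ≤ f)
    (hsupp : Function.support f ⊆ range (word M n))
    (hΦ : ∀ ω, Real.exp (Φ n ω) = f (word M n ω)) :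
    sepSum M Φ n ε ∈ Icc (∑ w, f w) (k ^ m * ∑ w, f w) := by
  have hub : ∀ s ∈ {s | ∃ E : Finset (Space M), IsSep M n ε E ∧
      s = ∑ ω ∈ E, Real.exp (Φ n ω)}, s ≤ k ^ m * ∑ w, f w := by
    rintro s ⟨E, hE, rfl⟩
    simpa only [hΦ] using hE.sum_comp_word_le hm hf
  obtain ⟨E, hE, hsum⟩ := exists_isSep_sum_comp_word_eq hε hsupp
  simp only [← hsum, ← hΦ] at hub ⊢
  exact ⟨le_csSup ⟨_, hub⟩ ⟨E, hE, rfl⟩, csSup_le ⟨_, E, hE, rfl⟩ hub⟩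

theorem isPressure_zero_of_sepSum_mem_Icc {Φ : ℕ → Space M → ℝ}
    (h : ∀ᶠ ε in 𝓝[>] (0 : ℝ), ∃ a > 0, ∃ b, ∀ n, sepSum M Φ n ε ∈ Icc a b) :
    IsPressure M Φ 0 := by
  refine tendsto_const_nhds.congr' ?_
  filter_upwards [h] with ε ⟨a, ha, b, hab⟩
  exact (tendsto_log_div_natCast_of_mem_Icc ha hab).limsup_eq.symm

theorem cyl_eq_preimage_word (n : ℕ) (w : Fin n → Fin k) : cyl M n w = word M n ⁻¹' {w} :=
  Set.ext fun _ => funext_iff.symm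

theorem measurable_word (n : ℕ) : Measurable (word M n) :=
  measurable_pi_lambda _ fun j => (measurable_pi_apply j.1).comp measurable_subtype_coe

theorem sum_measureReal_cyl (μ : Measure (Space M)) [IsFiniteMeasure μ] (n : ℕ) :
    ∑ w, μ.real (cyl M n w) = μ.real univ := by
  simp only [cyl_eq_preimage_word]
  rw [sum_measureReal_preimage_singleton _
    fun w _ => measurable_word n (measurableSet_singleton w), Finset.coe_univ, preimage_univ]

theorem support_measureReal_cyl_subset (μ : Measure (Space M)) (n : ℕ) :
    (Function.support fun w => μ.real (cyl M n w)) ⊆ range (word M n) := by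
  intro w hw
  obtain ⟨ω, hω⟩ := nonempty_of_measureReal_ne_zero hw
  exact ⟨ω, funext hω⟩

theorem WeakGibbs.measure_cyl_word_ne_zero {Φ : ℕ → Space M → ℝ} {P : ℝ} {μ : Measure (Space M)}
    (h : WeakGibbs M Φ P μ) (n : ℕ) (ω : Space M) : μ (cyl M n (word M n ω)) ≠ 0 := by
  obtain ⟨K, hK, -, hbound⟩ := h
  intro hzero
  have hle := (hbound n (word M n ω) ω fun _ => rfl).1
  rw [hzero, ENNReal.toReal_zero, zero_div] at hle
  exact hle.not_gt (one_div_pos.2 (hK n))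

end WG

open WG in
theorem psi_pressure_zero_general {k : ℕ} (M : Matrix (Fin k) (Fin k) ℕ) (μ : Measure (Space M))
    [IsFiniteMeasure μ] [NeZero μ] (hμ : ∀ n ω, μ (cyl M n (word M n ω)) ≠ 0)
    (Ψ : ℕ → Space M → ℝ) (hΨ : ∀ n ω, Ψ n ω = Real.log (μ.real (cyl M n (word M n ω)))) :
    IsPressure M Ψ 0 := by
  have hexp : ∀ n ω, Real.exp (Ψ n ω) = μ.real (cyl M n (word M n ω)) := by
    intro n ω
    have hpos : 0 < μ.real (cyl M n (word M n ω)) :=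
      measureReal_nonneg.lt_of_ne' ((measureReal_ne_zero_iff).2 (hμ n ω))
    rw [hΨ, Real.exp_log hpos]
  apply isPressure_zero_of_sepSum_mem_Icc
  filter_upwards [Ioo_mem_nhdsGT (show (0 : ℝ) < 1 / 2 by norm_num)] with ε hε
  obtain ⟨m, hm⟩ : ∃ m : ℕ, (k : ℝ) / 2 ^ m ≤ ε :=
    ((tendsto_const_nhds.div_atTop (tendsto_pow_atTop_atTop_of_one_lt
      one_lt_two)).eventually_le_const hε.1).exists
  refine ⟨μ.real univ, measureReal_univ_pos, k ^ m * μ.real univ, fun n => ?_⟩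
  simpa only [sum_measureReal_cyl] using sepSum_mem_Icc hm hε.2
    (fun _ => measureReal_nonneg) (support_measureReal_cyl_subset μ n) (hexp n)

open WG in
/-- with `ψ_n(ω) = log μ(C_{i₁…i_n})` for a weak Gibbs measure `μ` of an
asymptotically additive sequence `Φ` on a topologically mixing subshift of finite type,
the topological pressure of `Ψ = (ψ_n)` is zero. -/
theorem psi_pressure_zero
    {k : ℕ} (M : Matrix (Fin k) (Fin k) ℕ) (hmix : Mixing M)
    (Φ : ℕ → Space M → ℝ) (hΦ : AsympAdd M Φ) (P : ℝ) (hP : IsPressure M Φ P)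
    (μ : Measure (Space M)) (hμ : IsProbabilityMeasure μ)
    (hwg : WeakGibbs M Φ P μ)
    (Ψ : ℕ → Space M → ℝ)
    (hΨ : ∀ n : ℕ, ∀ ω : Space M, Ψ n ω = Real.log ((μ (cyl M n (word M n ω))).toReal)) :
    IsPressure M Ψ 0 :=
  psi_pressure_zero_general M μ hwg.measure_cyl_word_ne_zero Ψ hΨ
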